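/- Any LD limit point ρ of the invariant measures P^n is invariant for the limit transition kernel and continuous: ρ(x) = sup_{y∈S} ρ(y) · Π(y,x) for every x ∈ S, and the function x ↦ ρ(x) is continuous on S. -/

import Mathlib

open Filter Topology Metric Set MeasureTheory
open scoped NNReal

noncomputable section

/-- A deviability density on a topological space `E`. -/
def IsDeviabilityDensity {E : Type*} [TopologicalSpace E] (p : E → ℝ) : Prop :=
  (∀ x, p x ∈ Set.Icc (0:ℝ) 1) ∧ (⨆ x, p x) = 1 ∧
    ∀ γ ∈ Set.Ioc (0:ℝ) 1, IsCompact {x | γ ≤ p x}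

variable {S : Type*} [MetricSpace S]

/-- Time shift `θ_s` on continuous paths. -/
def pshift (s : ℝ≥0) (X : C(ℝ≥0, S)) : C(ℝ≥0, S) :=
  ⟨fun t => X (s + t), X.continuous.comp (continuous_const.add continuous_id)⟩

/-- `Π_{x,t}(y)`. -/
def transDen (Px : S → C(ℝ≥0, S) → ℝ) (x : S) (t : ℝ≥0) (y : S) : ℝ :=
  ⨆ X ∈ {X : C(ℝ≥0, S) | X t = y}, Px x X

/-- The standing assumptions (2.2)--(2.5) of the paper, together with the basic
assumptions on the family of path deviability densities `Px` and the set `A`. -/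
structure DevSetup (S : Type*) [MetricSpace S] (Px : S → C(ℝ≥0, S) → ℝ) (A : Set S) :
    Prop where
  dev : ∀ x, IsDeviabilityDensity (Px x)
  start : ∀ x (X : C(ℝ≥0, S)), X 0 ≠ x → Px x X = 0
  /-- (2.2) upper semicontinuity -/
  usc : UpperSemicontinuous (fun q : S × C(ℝ≥0, S) => Px q.1 q.2)
  /-- (2.2) uniform upper compactness -/
  cpt : ∀ K : Set S, IsCompact K → ∀ γ ∈ Set.Ioc (0:ℝ) 1,
    IsCompact (⋃ x ∈ K, {X : C(ℝ≥0, S) | γ ≤ Px x X})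
  /-- (2.3) the maxitive Markov property -/
  markov : ∀ x (X : C(ℝ≥0, S)) (s : ℝ≥0),
    Px x X = (⨆ X' ∈ {X' : C(ℝ≥0, S) | ∀ u ≤ s, X' u = X u}, Px x X') *
      Px (X s) (pshift s X)
  /-- (2.4) `A` is locally finite -/
  locFin : ∀ K : Set S, IsCompact K → (K ∩ A).Finite
  /-- (2.4)(i) -/
  attract : ∀ x (X : C(ℝ≥0, S)), Px x X = 1 → (⨅ t : ℝ≥0, infDist (X t) A) = 0
  /-- (2.4)(ii) -/
  equil : ∀ a ∈ A, Px a (ContinuousMap.const ℝ≥0 a) = 1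
  /-- (2.4)(iii) -/
  connect : ∀ a ∈ A, ∀ a' ∈ A, ∃ t : ℝ≥0, 0 < t ∧ 0 < transDen Px a t a'
  /-- (2.4)(iv) -/
  nearA : ∀ ε : ℝ, 0 < ε → ∃ δ : ℝ, 0 < δ ∧ ∀ x : S, infDist x A < δ →
    ∃ s₀ s₁ : ℝ≥0, 0 < s₀ ∧ 0 < s₁ ∧ ∃ a ∈ A,
      1 - ε < transDen Px x s₀ a ∧ 1 - ε < transDen Px a s₁ x
  /-- (2.4)(v) -/
  localMove : ∀ x : S, ∀ ε : ℝ, 0 < ε → ∃ δ : ℝ, 0 < δ ∧ ∃ t₀ t₁ : ℝ≥0,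
    ∀ x' : S, dist x x' < δ →
      1 - ε < transDen Px x t₀ x' ∧ 1 - ε < transDen Px x' t₁ x
  /-- (2.5) uniform tightness -/
  tight : ∀ K₁ : Set S, IsCompact K₁ → ∀ ε : ℝ, 0 < ε → ∃ K₂ : Set S, IsCompact K₂ ∧
    Filter.limsup (fun t : ℝ≥0 => ⨆ x ∈ K₁, ⨆ y ∈ K₂ᶜ, transDen Px x t y) atTop < ε

/-- LD convergence at the given rate of a sequence of Borel probability measures to a
deviability density. -/
def LDConv {E : Type*} [TopologicalSpace E] [MeasurableSpace E]
    (Q : ℕ → Measure E) (rate : ℕ → ℕ) (p : E → ℝ) : Prop :=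
  ∀ f : E → ℝ, Continuous f → (∀ x, 0 ≤ f x) → BddAbove (Set.range f) →
    Tendsto (fun n => (∫ x, (f x) ^ (rate n) ∂(Q n)) ^ ((rate n : ℝ)⁻¹)) atTop
      (𝓝 (⨆ x, f x * p x))

variable [MeasurableSpace S] [BorelSpace S]

/-- The max flux `Φ_ρ(Γ,Γ')` relative to the limiting transition density `PL`. -/
def maxFlux (PL : S → S → ℝ) (ρ : S → ℝ) (Γ Γ' : Set S) : ℝ :=
  ⨆ x ∈ Γ, ρ x * ⨆ y ∈ Γ', PL x y

/-- `Φ_ρ(Γ, x)`, the max flux into a point. -/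
def maxFluxPt (PL : S → S → ℝ) (ρ : S → ℝ) (Γ : Set S) (x : S) : ℝ :=
  ⨆ a ∈ Γ, ρ a * PL a x

/-!
Varadhan's lemma, for integrands depending on `n`, turns `P^n = P^n κ^n_t` into the identity
`sup_y f(y) ρ(y) = sup_z sup_y ρ(z) Π_{z,t}(y) f(y)` for continuous `0 ≤ f ≤ 1`. Bump functions
`f` around a point `x` give `ρ(y) Π_{y,t}(x) ≤ ρ(x)` and, conversely, for every `t` some
`ρ(z) Π_{z,t}(y)` almost as large as `ρ(x)` with `y` near `x`. By (2.4)(v) the first inequality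
makes `ρ` lower semicontinuous; upper semicontinuity holds for every deviability density. For the
invariance of `ρ` under the limit kernel, (2.4)(v) and `Π_{z,s}(y) Π_{y,t}(x) ≤ Π_{z,s+t}(x)`
first move the endpoint `y` to `x`. The starting points `z` that are nearly optimal at time `t`
lie in a compact superlevel set of `ρ`, so they accumulate at some `w` as `t → ∞`, and a further
move replaces them by `w`.
-/

open BoundedContinuousFunction ProbabilityTheory
open scoped ENNReal

section ExpGrowth

variable {ι : Type*} {l : Filter ι} {rate : ι → ℕ} {u v : ι → ℝ≥0∞} {a b : ℝ≥0∞}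

/-- The upper exponential growth bound `limsup u ^ (1 / rate) ≤ a` along `l`, stated without roots
so that indices with `rate i = 0` cause no trouble. -/
def ExpGrowthLE (l : Filter ι) (rate : ι → ℕ) (u : ι → ℝ≥0∞) (a : ℝ≥0∞) : Prop :=
  ∀ b > a, ∀ᶠ i in l, u i ≤ b ^ rate i

/-- The lower exponential growth bound `a ≤ liminf u ^ (1 / rate)` along `l`, in the same root-free
form as `ExpGrowthLE`. -/
def ExpGrowthGE (l : Filter ι) (rate : ι → ℕ) (u : ι → ℝ≥0∞) (a : ℝ≥0∞) : Prop :=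
  ∀ b < a, ∀ᶠ i in l, b ^ rate i ≤ u i

theorem ExpGrowthGE.le_of_expGrowthLE [l.NeBot] (hrate : ∀ᶠ i in l, rate i ≠ 0)
    (ha : ExpGrowthGE l rate u a) (hb : ExpGrowthLE l rate u b) : a ≤ b := by
  by_contra! hba
  obtain ⟨c, hbc, hca⟩ := exists_between hba
  obtain ⟨d, hcd, hda⟩ := exists_between hca
  obtain ⟨i, hi, hdu, huc⟩ := (hrate.and ((ha d hda).and (hb c hbc))).exists
  exact (ENNReal.pow_lt_pow_left hi hcd).not_ge (hdu.trans huc)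

theorem ExpGrowthLE.mono (hu : ExpGrowthLE l rate u a) (hvu : ∀ᶠ i in l, v i ≤ u i)
    (hab : a ≤ b) : ExpGrowthLE l rate v b := fun c hc => by
  filter_upwards [hvu, hu c (hab.trans_lt hc)] with i hvi hui using hvi.trans hui

theorem expGrowthLE_of_eventually_le_pow (hu : ∀ᶠ i in l, u i ≤ a ^ rate i) :
    ExpGrowthLE l rate u a := fun _ hb =>
  hu.mono fun _ hi => hi.trans (by gcongr)

theorem ExpGrowthLE.add (hrate : Tendsto rate l atTop) (hu : ExpGrowthLE l rate u a)
    (hv : ExpGrowthLE l rate v a) : ExpGrowthLE l rate (fun i => u i + v i) a := fun b hb => by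
  obtain ⟨c, hac, hcb⟩ := exists_between hb
  have hc0 : c ≠ 0 := hac.ne_bot
  have hctop : c ≠ ∞ := hcb.ne_top
  have hratio : 1 < b / c := by
    rwa [ENNReal.lt_div_iff_mul_lt (.inl hc0) (.inl hctop), one_mul]
  have htwo : ∀ᶠ i in l, 2 < (b / c) ^ rate i :=
    ((ENNReal.tendsto_pow_atTop_nhds_top_iff.2 hratio).comp hrate).eventually_const_lt
      ENNReal.ofNat_lt_top
  filter_upwards [hu c hac, hv c hac, htwo] with i hui hvi hi
  calc u i + v i ≤ c ^ rate i + c ^ rate i := add_le_add hui hvi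
    _ = 2 * c ^ rate i := (two_mul _).symm
    _ ≤ (b / c) ^ rate i * c ^ rate i := by gcongr
    _ = b ^ rate i := by rw [← mul_pow, ENNReal.div_mul_cancel hc0 hctop]

theorem ExpGrowthLE.comp {ι' : Type*} {m : Filter ι'} {φ : ι' → ι} (hu : ExpGrowthLE l rate u a)
    (hφ : Tendsto φ m l) : ExpGrowthLE m (rate ∘ φ) (u ∘ φ) a :=
  fun b hb => hφ.eventually (hu b hb)

theorem ExpGrowthGE.comp {ι' : Type*} {m : Filter ι'} {φ : ι' → ι} (hu : ExpGrowthGE l rate u a)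
    (hφ : Tendsto φ m l) : ExpGrowthGE m (rate ∘ φ) (u ∘ φ) a :=
  fun b hb => hφ.eventually (hu b hb)

end ExpGrowth

section Topology

theorem exists_nnreal_bump_of_isClosed_subset_isOpen {E : Type*} [TopologicalSpace E]
    [NormalSpace E] {F V : Set E} (hF : IsClosed F) (hV : IsOpen V) (hFV : F ⊆ V) :
    ∃ f : E →ᵇ ℝ≥0, (∀ x ∈ F, f x = 1) ∧ (∀ x ∉ V, f x = 0) ∧ ∀ x, f x ≤ 1 := by
  obtain ⟨f, hf0, hf1, hf⟩ := exists_bounded_zero_one_of_closed hV.isClosed_compl hF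
    (disjoint_compl_left_iff_subset.2 hFV)
  refine ⟨f.nnrealPart, fun x hx => ?_, fun x hx => ?_, fun x => ?_⟩
  · simp [hf1 hx]
  · simp [hf0 hx]
  · simpa using (hf x).2

theorem eventually_atTop_prod_nhds_of_forall_seq {E : Type*} [TopologicalSpace E]
    [FirstCountableTopology E] {z : E} {R : ℕ → E → Prop}
    (h : ∀ xs : ℕ → E, Tendsto xs atTop (𝓝 z) → ∀ᶠ n in atTop, R n (xs n)) :
    ∀ᶠ q in atTop ×ˢ 𝓝 z, R q.1 q.2 := by
  by_contra hfreq
  obtain ⟨q, hq, hqR⟩ := Filter.exists_seq_forall_of_frequently (not_eventually.1 hfreq)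
  obtain ⟨ψ, hψ, hmono⟩ := strictMono_subseq_of_tendsto_atTop (tendsto_fst.comp hq)
  have hsnd : Tendsto (fun k => (q (ψ k)).2) atTop (𝓝 z) :=
    (tendsto_snd.comp hq).comp hψ.tendsto_atTop
  -- Place the bad points at their own indices and fill the gaps with `z`.
  let xs : ℕ → E := Function.extend (fun k => (q (ψ k)).1) (fun k => (q (ψ k)).2) fun _ => z
  have hxs_apply (k : ℕ) : xs (q (ψ k)).1 = (q (ψ k)).2 := hmono.injective.extend_apply _ _ k
  have hxs : Tendsto xs atTop (𝓝 z) := fun V hV => by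
    rw [← Nat.cofinite_eq_atTop] at hsnd ⊢
    refine ((hsnd hV).image fun k => (q (ψ k)).1).subset fun n hn => ?_
    by_cases hk : ∃ k, (q (ψ k)).1 = n
    · obtain ⟨k, rfl⟩ := hk
      exact ⟨k, by simpa [hxs_apply] using hn, rfl⟩
    · refine absurd ?_ hn
      simpa [xs, Function.extend_apply' _ _ _ hk] using mem_of_mem_nhds hV
  obtain ⟨k, hk⟩ := (hmono.tendsto_atTop.eventually (h xs hxs)).exists
  exact hqR (ψ k) (hxs_apply k ▸ hk)

end Topology

namespace IsDeviabilityDensity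

variable {E : Type*} [TopologicalSpace E] {p : E → ℝ}

theorem nonneg (hp : IsDeviabilityDensity p) (x : E) : 0 ≤ p x := (hp.1 x).1

theorem isCompact_setOf_le (hp : IsDeviabilityDensity p) {c : ℝ} (hc : 0 < c) :
    IsCompact {x | c ≤ p x} := by
  rcases le_or_gt c 1 with hc1 | hc1
  · exact hp.2.2 c ⟨hc, hc1⟩
  · convert isCompact_empty
    exact eq_empty_of_forall_notMem fun x hx => (hc1.trans_le hx).not_ge (hp.1 x).2

theorem upperSemicontinuous [T2Space E] (hp : IsDeviabilityDensity p) :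
    UpperSemicontinuous p := by
  refine upperSemicontinuous_iff_isClosed_preimage.2 fun c => ?_
  rcases lt_or_ge 0 c with hc | hc
  · exact (hp.isCompact_setOf_le hc).isClosed
  · convert isClosed_univ
    exact eq_univ_of_forall fun x => hc.trans (hp.nonneg x)

end IsDeviabilityDensity

theorem isOpen_setOf_ofReal_lt {E : Type*} [TopologicalSpace E] {p : E → ℝ}
    (hp : UpperSemicontinuous p) (c : ℝ≥0∞) : IsOpen {x | ENNReal.ofReal (p x) < c} :=
  (ENNReal.continuous_ofReal.comp_upperSemicontinuous hp fun _ _ h =>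
    ENNReal.ofReal_le_ofReal h).isOpen_preimage c

namespace LDConv

variable {E : Type*} [TopologicalSpace E] [MeasurableSpace E] [OpensMeasurableSpace E]
  {Q : ℕ → Measure E} [∀ n, IsFiniteMeasure (Q n)] {rate : ℕ → ℕ} {p : E → ℝ}

theorem tendsto_lintegral_pow (h : LDConv Q rate p) (hp : ∀ x, p x ∈ Icc (0 : ℝ) 1)
    (f : E →ᵇ ℝ≥0) :
    Tendsto (fun n => (∫⁻ x, (f x : ℝ≥0∞) ^ rate n ∂Q n) ^ ((rate n : ℝ)⁻¹)) atTop
      (𝓝 (⨆ x, f x * ENNReal.ofReal (p x))) := by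
  have hbound (x : E) : f x * ENNReal.ofReal (p x) ≤ (nndist f 0 : ℝ≥0) := by
    calc f x * ENNReal.ofReal (p x) ≤ (nndist f 0 : ℝ≥0) * 1 := by
          gcongr
          exacts [NNReal.upper_bound f x, ENNReal.ofReal_le_one.2 (hp x).2]
      _ = (nndist f 0 : ℝ≥0) := mul_one _
  have hsup : ENNReal.ofReal (⨆ x, (f x : ℝ) * p x) = ⨆ x, f x * ENNReal.ofReal (p x) := by
    rw [← ENNReal.ofReal_toReal (ne_top_of_le_ne_top ENNReal.coe_ne_top (iSup_le hbound)),
      ENNReal.toReal_iSup fun x => ne_top_of_le_ne_top ENNReal.coe_ne_top (hbound x)]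
    simp [(hp _).1]
  have hint (n : ℕ) : ENNReal.ofReal ((∫ x, (f x : ℝ) ^ rate n ∂Q n) ^ ((rate n : ℝ)⁻¹)) =
      (∫⁻ x, (f x : ℝ≥0∞) ^ rate n ∂Q n) ^ ((rate n : ℝ)⁻¹) := by
    have hfin := lintegral_lt_top_of_nnreal (Q n) (f ^ rate n)
    have heq := toReal_lintegral_coe_eq_integral (f ^ rate n) (Q n)
    simp only [BoundedContinuousFunction.coe_pow, Pi.pow_apply, ENNReal.coe_pow,
      NNReal.coe_pow] at hfin heq
    rw [← heq, ← ENNReal.ofReal_rpow_of_nonneg ENNReal.toReal_nonneg (by positivity),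
      ENNReal.ofReal_toReal hfin.ne]
  have hlim := h (fun x => f x) (NNReal.continuous_coe.comp f.continuous) (fun x => (f x).2)
    ⟨nndist f 0, by rintro _ ⟨x, rfl⟩; exact NNReal.upper_bound f x⟩
  simpa only [Function.comp_def, hsup, hint] using (ENNReal.continuous_ofReal.tendsto _).comp hlim

theorem expGrowthLE_lintegral_pow (h : LDConv Q rate p) (hrate : Tendsto rate atTop atTop)
    (hp : ∀ x, p x ∈ Icc (0 : ℝ) 1) (f : E →ᵇ ℝ≥0) :
    ExpGrowthLE atTop rate (fun n => ∫⁻ x, (f x : ℝ≥0∞) ^ rate n ∂Q n)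
      (⨆ x, f x * ENNReal.ofReal (p x)) := fun b hb => by
  filter_upwards [(h.tendsto_lintegral_pow hp f).eventually_lt_const hb,
    hrate.eventually_gt_atTop 0] with n hn hpos
  simpa using (ENNReal.rpow_inv_le_iff (by exact_mod_cast hpos)).1 hn.le

theorem expGrowthGE_lintegral_pow (h : LDConv Q rate p) (hrate : Tendsto rate atTop atTop)
    (hp : ∀ x, p x ∈ Icc (0 : ℝ) 1) (f : E →ᵇ ℝ≥0) :
    ExpGrowthGE atTop rate (fun n => ∫⁻ x, (f x : ℝ≥0∞) ^ rate n ∂Q n)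
      (⨆ x, f x * ENNReal.ofReal (p x)) := fun b hb => by
  filter_upwards [(h.tendsto_lintegral_pow hp f).eventually_const_lt hb,
    hrate.eventually_gt_atTop 0] with n hn hpos
  simpa using (ENNReal.le_rpow_inv_iff (by exact_mod_cast hpos)).1 hn.le

theorem expGrowthGE_measure_of_isOpen [T4Space E] (h : LDConv Q rate p)
    (hrate : Tendsto rate atTop atTop) (hp : ∀ x, p x ∈ Icc (0 : ℝ) 1) {V : Set E}
    (hV : IsOpen V) :
    ExpGrowthGE atTop rate (fun n => Q n V) (⨆ x ∈ V, ENNReal.ofReal (p x)) := fun b hb => by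
  simp only [lt_iSup_iff] at hb
  obtain ⟨x, hxV, hbx⟩ := hb
  obtain ⟨f, hf1, hf0, hf⟩ :=
    exists_nnreal_bump_of_isClosed_subset_isOpen isClosed_singleton hV (singleton_subset_iff.2 hxV)
  have hx : b < ⨆ y, f y * ENNReal.ofReal (p y) :=
    hbx.trans_le (le_iSup_of_le x (by simp [hf1 x rfl]))
  filter_upwards [h.expGrowthGE_lintegral_pow hrate hp f b hx, hrate.eventually_gt_atTop 0]
    with n hn hpos
  rw [← lintegral_indicator_one hV.measurableSet]
  refine hn.trans (lintegral_mono fun y => ?_)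
  by_cases hy : y ∈ V
  · simpa [hy] using pow_le_one₀ zero_le (ENNReal.coe_le_one_iff.2 (hf y))
  · simp [hf0 y hy, hpos.ne']

theorem expGrowthLE_measure_of_isClosed [NormalSpace E] (h : LDConv Q rate p)
    (hrate : Tendsto rate atTop atTop) (hp : ∀ x, p x ∈ Icc (0 : ℝ) 1)
    (husc : UpperSemicontinuous p) {F : Set E} (hF : IsClosed F) :
    ExpGrowthLE atTop rate (fun n => Q n F) (⨆ x ∈ F, ENNReal.ofReal (p x)) := fun b hb => by
  obtain ⟨c, hFc, hcb⟩ := exists_between hb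
  obtain ⟨f, hf1, hf0, hf⟩ := exists_nnreal_bump_of_isClosed_subset_isOpen hF
    (isOpen_setOf_ofReal_lt husc c)
    fun x hx => (le_iSup₂_of_le x hx le_rfl).trans_lt hFc
  have hsup : ⨆ x, f x * ENNReal.ofReal (p x) ≤ c := by
    refine iSup_le fun x => ?_
    by_cases hx : ENNReal.ofReal (p x) < c
    · exact (mul_le_of_le_one_left' (ENNReal.coe_le_one_iff.2 (hf x))).trans hx.le
    · simp [hf0 x hx]
  filter_upwards [h.expGrowthLE_lintegral_pow hrate hp f b (hsup.trans_lt hcb)] with n hn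
  rw [← lintegral_indicator_one hF.measurableSet]
  refine (lintegral_mono fun x => ?_).trans hn
  by_cases hx : x ∈ F
  · simp [hx, hf1 x hx]
  · simp [hx]

theorem exists_isOpen_expGrowthLE_setLIntegral [T4Space E] (h : LDConv Q rate p)
    (hrate : Tendsto rate atTop atTop) (hp : ∀ x, p x ∈ Icc (0 : ℝ) 1)
    (husc : UpperSemicontinuous p) {G : ℕ → E → ℝ≥0∞} {z : E} {a c : ℝ≥0∞} (ha : a ≠ ∞)
    (hG : ExpGrowthLE (atTop ×ˢ 𝓝 z) (fun q => rate q.1) (fun q => G q.1 q.2) a)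
    (hc : a * ENNReal.ofReal (p z) < c) :
    ∃ U, IsOpen U ∧ z ∈ U ∧ ExpGrowthLE atTop rate (fun n => ∫⁻ w in U, G n w ∂Q n) c := by
  obtain ⟨α, haα, β, hβ, hαβ⟩ : ∃ α > a, ∃ β > ENNReal.ofReal (p z), α * β < c := by
    by_contra! hcon
    exact hc.not_ge (ENNReal.le_mul_of_forall_lt (.inr ENNReal.ofReal_ne_top) (.inl ha) hcon)
  obtain ⟨γ, hγ, hγβ⟩ := exists_between hβ
  obtain ⟨F, hFz, hF, hFγ⟩ :=
    exists_mem_nhds_isClosed_subset ((isOpen_setOf_ofReal_lt husc γ).mem_nhds hγ)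
  have hsup : ⨆ x ∈ F, ENNReal.ofReal (p x) < β :=
    (iSup₂_le fun x hx => (hFγ hx).le).trans_lt hγβ
  obtain ⟨R, hR, B, hB, hRB⟩ := eventually_prod_iff.1 (hG α haα)
  obtain ⟨U, hU, hUo, hzU⟩ := mem_nhds_iff.1 (Filter.inter_mem hFz hB)
  refine ⟨U, hUo, hzU, expGrowthLE_of_eventually_le_pow ?_⟩
  filter_upwards [hR, h.expGrowthLE_measure_of_isClosed hrate hp husc hF β hsup] with n hn hQ
  calc ∫⁻ w in U, G n w ∂Q n ≤ ∫⁻ _ in U, α ^ rate n ∂Q n :=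
        setLIntegral_mono' hUo.measurableSet fun w hw => hRB hn (hU hw).2
    _ = α ^ rate n * Q n U := setLIntegral_const _ _
    _ ≤ α ^ rate n * β ^ rate n := by
        gcongr
        exact (measure_mono fun w hw => (hU hw).1).trans hQ
    _ = (α * β) ^ rate n := (mul_pow _ _ _).symm
    _ ≤ c ^ rate n := by gcongr

theorem exists_isOpen_superset_expGrowthLE_setLIntegral [T4Space E] (h : LDConv Q rate p)
    (hrate : Tendsto rate atTop atTop) (hp : ∀ x, p x ∈ Icc (0 : ℝ) 1)
    (husc : UpperSemicontinuous p) {G : ℕ → E → ℝ≥0∞} {g : E → ℝ≥0∞} {K : Set E} {c : ℝ≥0∞}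
    (hK : IsCompact K) (hg : ∀ z ∈ K, g z ≠ ∞)
    (hG : ∀ z ∈ K, ExpGrowthLE (atTop ×ˢ 𝓝 z) (fun q => rate q.1) (fun q => G q.1 q.2) (g z))
    (hc : ∀ z ∈ K, g z * ENNReal.ofReal (p z) < c) :
    ∃ W, IsOpen W ∧ K ⊆ W ∧ ExpGrowthLE atTop rate (fun n => ∫⁻ w in W, G n w ∂Q n) c := by
  refine hK.induction_on ⟨∅, isOpen_empty, subset_rfl, fun b _ => by simp⟩ ?_ ?_ fun z hz => ?_
  · rintro s t hst ⟨W, hWo, htW, hW⟩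
    exact ⟨W, hWo, hst.trans htW, hW⟩
  · rintro s t ⟨W, hWo, hsW, hW⟩ ⟨W', hWo', htW', hW'⟩
    exact ⟨W ∪ W', hWo.union hWo', union_subset_union hsW htW',
      (hW.add hrate hW').mono (.of_forall fun n => lintegral_union_le _ _ _) le_rfl⟩
  · obtain ⟨U, hUo, hzU, hU⟩ := h.exists_isOpen_expGrowthLE_setLIntegral hrate hp husc
      (hg z hz) (hG z hz) (hc z hz)
    exact ⟨U, mem_nhdsWithin_of_mem_nhds (hUo.mem_nhds hzU), U, hUo, subset_rfl, hU⟩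

theorem expGrowthLE_lintegral [T4Space E] (h : LDConv Q rate p)
    (hrate : Tendsto rate atTop atTop) (hp : IsDeviabilityDensity p) {G : ℕ → E → ℝ≥0∞}
    {g : E → ℝ≥0∞} (hG_le : ∀ n z, G n z ≤ 1) (hg : ∀ z, g z ≠ ∞)
    (hG : ∀ z, ExpGrowthLE (atTop ×ˢ 𝓝 z) (fun q => rate q.1) (fun q => G q.1 q.2) (g z)) :
    ExpGrowthLE atTop rate (fun n => ∫⁻ z, G n z ∂Q n) (⨆ z, g z * ENNReal.ofReal (p z)) := by
  intro b hb
  obtain ⟨c, hsup, hcb⟩ := exists_between hb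
  have hK : IsCompact {z | c ≤ ENNReal.ofReal (p z)} := by
    simpa only [ENNReal.le_ofReal_iff_toReal_le hcb.ne_top (hp.nonneg _)] using
      hp.isCompact_setOf_le (ENNReal.toReal_pos hsup.ne_bot hcb.ne_top)
  obtain ⟨W, hWo, hKW, hW⟩ := h.exists_isOpen_superset_expGrowthLE_setLIntegral hrate hp.1
    hp.upperSemicontinuous hK (fun z _ => hg z) (fun z _ => hG z)
    fun z _ => (le_iSup_of_le z le_rfl).trans_lt hsup
  have hWc : ExpGrowthLE atTop rate (fun n => ∫⁻ z in Wᶜ, G n z ∂Q n) c := by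
    refine (h.expGrowthLE_measure_of_isClosed hrate hp.1 hp.upperSemicontinuous
      hWo.isClosed_compl).mono (.of_forall fun n => ?_)
      (iSup₂_le fun z hz => (not_le.1 fun hzK => hz (hKW hzK)).le)
    calc ∫⁻ z in Wᶜ, G n z ∂Q n ≤ ∫⁻ _ in Wᶜ, 1 ∂Q n := lintegral_mono fun z => hG_le n z
      _ = Q n Wᶜ := setLIntegral_one _
  simpa only [lintegral_add_compl _ hWo.measurableSet] using hW.add hrate hWc b hcb

theorem expGrowthGE_lintegral [T4Space E] (h : LDConv Q rate p)
    (hrate : Tendsto rate atTop atTop) (hp : ∀ x, p x ∈ Icc (0 : ℝ) 1) {G : ℕ → E → ℝ≥0∞}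
    {g : E → ℝ≥0∞}
    (hG : ∀ z, ExpGrowthGE (atTop ×ˢ 𝓝 z) (fun q => rate q.1) (fun q => G q.1 q.2) (g z)) :
    ExpGrowthGE atTop rate (fun n => ∫⁻ z, G n z ∂Q n) (⨆ z, g z * ENNReal.ofReal (p z)) := by
  intro b hb
  obtain ⟨z, hz⟩ := lt_iSup_iff.1 hb
  obtain ⟨α, hα, β, hβ, hαβ⟩ : ∃ α < g z, ∃ β < ENNReal.ofReal (p z), b < α * β := by
    by_contra! hcon
    exact hz.not_ge (ENNReal.mul_le_of_forall_lt hcon)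
  obtain ⟨R, hR, B, hB, hRB⟩ := eventually_prod_iff.1 (hG z α hα)
  obtain ⟨U, hUB, hUo, hzU⟩ := mem_nhds_iff.1 hB
  filter_upwards [hR, h.expGrowthGE_measure_of_isOpen hrate hp hUo β
    (hβ.trans_le (le_iSup₂_of_le z hzU le_rfl))] with n hn hQ
  calc b ^ rate n ≤ (α * β) ^ rate n := by gcongr
    _ = α ^ rate n * β ^ rate n := mul_pow _ _ _
    _ ≤ α ^ rate n * Q n U := by gcongr
    _ = ∫⁻ _ in U, α ^ rate n ∂Q n := (setLIntegral_const _ _).symm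
    _ ≤ ∫⁻ w in U, G n w ∂Q n :=
        setLIntegral_mono' hUo.measurableSet fun w hw => hRB hn (hUB hw)
    _ ≤ ∫⁻ w, G n w ∂Q n := setLIntegral_le_lintegral _ _

end LDConv

section KernelGrowth

variable {E F : Type*} [TopologicalSpace E] [MeasurableSpace E] [OpensMeasurableSpace E]
  [TopologicalSpace F] [FirstCountableTopology F] [MeasurableSpace F] {κ : ℕ → Kernel F E}
  [∀ n, IsFiniteKernel (κ n)] {p : E → ℝ} {z : F}

theorem expGrowthLE_kernel_lintegral_pow
    (hκ : ∀ xs : ℕ → F, Tendsto xs atTop (𝓝 z) → LDConv (fun n => κ n (xs n)) (fun n => n) p)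
    (hp : ∀ x, p x ∈ Icc (0 : ℝ) 1) (f : E →ᵇ ℝ≥0) :
    ExpGrowthLE (atTop ×ˢ 𝓝 z) Prod.fst (fun q => ∫⁻ y, (f y : ℝ≥0∞) ^ q.1 ∂κ q.1 q.2)
      (⨆ y, f y * ENNReal.ofReal (p y)) := fun b hb =>
  eventually_atTop_prod_nhds_of_forall_seq
    (R := fun n z' => ∫⁻ y, (f y : ℝ≥0∞) ^ n ∂κ n z' ≤ b ^ n) fun xs hxs =>
      (hκ xs hxs).expGrowthLE_lintegral_pow tendsto_id hp f b hb

theorem expGrowthGE_kernel_lintegral_pow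
    (hκ : ∀ xs : ℕ → F, Tendsto xs atTop (𝓝 z) → LDConv (fun n => κ n (xs n)) (fun n => n) p)
    (hp : ∀ x, p x ∈ Icc (0 : ℝ) 1) (f : E →ᵇ ℝ≥0) :
    ExpGrowthGE (atTop ×ˢ 𝓝 z) Prod.fst (fun q => ∫⁻ y, (f y : ℝ≥0∞) ^ q.1 ∂κ q.1 q.2)
      (⨆ y, f y * ENNReal.ofReal (p y)) := fun b hb =>
  eventually_atTop_prod_nhds_of_forall_seq
    (R := fun n z' => b ^ n ≤ ∫⁻ y, (f y : ℝ≥0∞) ^ n ∂κ n z') fun xs hxs =>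
      (hκ xs hxs).expGrowthGE_lintegral_pow tendsto_id hp f b hb

end KernelGrowth

theorem invariant_of_forall_measure_eq_lintegral {α : Type*} [MeasurableSpace α] {κ : Kernel α α}
    {μ : Measure α} (h : ∀ s, MeasurableSet s → μ s = ∫⁻ x, κ x s ∂μ) : κ.Invariant μ :=
  Measure.ext fun s hs => by rw [Measure.bind_apply hs κ.aemeasurable, h s hs]

theorem lintegral_lintegral_of_invariant {α : Type*} [MeasurableSpace α] {κ : Kernel α α}
    {μ : Measure α} (hinv : κ.Invariant μ) {g : α → ℝ≥0∞} (hg : Measurable g) :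
    ∫⁻ z, ∫⁻ y, g y ∂κ z ∂μ = ∫⁻ y, g y ∂μ := by
  rw [← Measure.lintegral_bind κ.aemeasurable hg.aemeasurable, hinv.def]

section Invariance

variable {E : Type*} [TopologicalSpace E] [MeasurableSpace E] [OpensMeasurableSpace E]
  [T4Space E] [FirstCountableTopology E] {κ : ℕ → Kernel E E} [∀ n, IsMarkovKernel (κ n)]
  {K : E → E → ℝ} {P : ℕ → Measure E} [∀ n, IsFiniteMeasure (P n)] {ρ : E → ℝ} {φ : ℕ → ℕ}

theorem iSup_mul_eq_of_invariant (hinv : ∀ n, (κ n).Invariant (P n))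
    (hκ : ∀ (x : E) (xs : ℕ → E), Tendsto xs atTop (𝓝 x) →
      LDConv (fun n => κ n (xs n)) (fun n => n) (K x))
    (hK : ∀ x y, K x y ∈ Icc (0 : ℝ) 1) (hρ : IsDeviabilityDensity ρ)
    (hφ : Tendsto φ atTop atTop) (hP : LDConv (fun k => P (φ k)) φ ρ) (f : E →ᵇ ℝ≥0)
    (hf : ∀ x, f x ≤ 1) :
    ⨆ y, f y * ENNReal.ofReal (ρ y) =
      ⨆ z, (⨆ y, f y * ENNReal.ofReal (K z y)) * ENNReal.ofReal (ρ z) := by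
  have hf' (y : E) : (f y : ℝ≥0∞) ≤ 1 := ENNReal.coe_le_one_iff.2 (hf y)
  have hφz (z : E) : Tendsto (Prod.map φ id) (atTop ×ˢ 𝓝 z) (atTop ×ˢ 𝓝 z) :=
    hφ.prodMap tendsto_id
  have hint_le (n : ℕ) (z : E) : ∫⁻ y, (f y : ℝ≥0∞) ^ n ∂κ n z ≤ 1 :=
    (lintegral_mono fun y => pow_le_one₀ zero_le (hf' y)).trans (by simp)
  have hsup_ne_top (z : E) : ⨆ y, f y * ENNReal.ofReal (K z y) ≠ ∞ :=
    ne_top_of_le_ne_top ENNReal.one_ne_top <|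
      iSup_le fun y => mul_le_one' (hf' y) (ENNReal.ofReal_le_one.2 (hK z y).2)
  have hstep (k : ℕ) : ∫⁻ z, ∫⁻ y, (f y : ℝ≥0∞) ^ φ k ∂κ (φ k) z ∂P (φ k) =
      ∫⁻ y, (f y : ℝ≥0∞) ^ φ k ∂P (φ k) :=
    lintegral_lintegral_of_invariant (hinv (φ k))
      (f.continuous.measurable.coe_nnreal_ennreal.pow_const _)
  have hLE := hP.expGrowthLE_lintegral hφ hρ (fun _ => hint_le _) hsup_ne_top fun z =>
    (expGrowthLE_kernel_lintegral_pow (hκ z) (hK z) f).comp (hφz z)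
  have hGE := hP.expGrowthGE_lintegral hφ hρ.1
    (G := fun k z => ∫⁻ y, (f y : ℝ≥0∞) ^ φ k ∂κ (φ k) z) fun z =>
    (expGrowthGE_kernel_lintegral_pow (hκ z) (hK z) f).comp (hφz z)
  simp only [hstep] at hLE hGE
  have hrate : ∀ᶠ k in atTop, φ k ≠ 0 := hφ.eventually_ne_atTop 0
  exact le_antisymm ((hP.expGrowthGE_lintegral_pow hφ hρ.1 f).le_of_expGrowthLE hrate hLE)
    (hGE.le_of_expGrowthLE hrate (hP.expGrowthLE_lintegral_pow hφ hρ.1 f))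

theorem mul_le_of_invariant (hinv : ∀ n, (κ n).Invariant (P n))
    (hκ : ∀ (x : E) (xs : ℕ → E), Tendsto xs atTop (𝓝 x) →
      LDConv (fun n => κ n (xs n)) (fun n => n) (K x))
    (hK : ∀ x y, K x y ∈ Icc (0 : ℝ) 1) (hρ : IsDeviabilityDensity ρ)
    (hφ : Tendsto φ atTop atTop) (hP : LDConv (fun k => P (φ k)) φ ρ) (x y : E) :
    ρ y * K y x ≤ ρ x := by
  rw [← ENNReal.ofReal_le_ofReal_iff (hρ.nonneg x), ENNReal.ofReal_mul (hρ.nonneg y)]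
  refine le_of_forall_gt_imp_ge_of_dense fun b hb => ?_
  obtain ⟨f, hf1, hf0, hf⟩ := exists_nnreal_bump_of_isClosed_subset_isOpen isClosed_singleton
    (isOpen_setOf_ofReal_lt hρ.upperSemicontinuous b) (singleton_subset_iff.2 hb)
  calc ENNReal.ofReal (ρ y) * ENNReal.ofReal (K y x)
      = f x * ENNReal.ofReal (K y x) * ENNReal.ofReal (ρ y) := by
        rw [hf1 x rfl, ENNReal.coe_one, one_mul, mul_comm]
    _ ≤ ⨆ z, (⨆ w, f w * ENNReal.ofReal (K z w)) * ENNReal.ofReal (ρ z) :=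
        le_iSup_of_le y (by gcongr; exact le_iSup_of_le x le_rfl)
    _ = ⨆ w, f w * ENNReal.ofReal (ρ w) :=
        (iSup_mul_eq_of_invariant hinv hκ hK hρ hφ hP f hf).symm
    _ ≤ b := iSup_le fun w => by
        by_cases hw : ENNReal.ofReal (ρ w) < b
        · exact (mul_le_of_le_one_left' (ENNReal.coe_le_one_iff.2 (hf w))).trans hw.le
        · simp [hf0 w hw]

theorem exists_lt_mul_of_invariant (hinv : ∀ n, (κ n).Invariant (P n))
    (hκ : ∀ (x : E) (xs : ℕ → E), Tendsto xs atTop (𝓝 x) →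
      LDConv (fun n => κ n (xs n)) (fun n => n) (K x))
    (hK : ∀ x y, K x y ∈ Icc (0 : ℝ) 1) (hρ : IsDeviabilityDensity ρ)
    (hφ : Tendsto φ atTop atTop) (hP : LDConv (fun k => P (φ k)) φ ρ) {x : E} {V : Set E}
    (hV : V ∈ 𝓝 x) {b : ℝ} (hb : b < ρ x) (hb0 : 0 ≤ b) :
    ∃ z, ∃ y ∈ V, b < ρ z * K z y := by
  obtain ⟨f, hf1, hf0, hf⟩ := exists_nnreal_bump_of_isClosed_subset_isOpen isClosed_singleton
    isOpen_interior (singleton_subset_iff.2 (mem_interior_iff_mem_nhds.2 hV))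
  have hsup : ENNReal.ofReal b < ⨆ z, (⨆ y, f y * ENNReal.ofReal (K z y)) * ENNReal.ofReal (ρ z) :=
    calc ENNReal.ofReal b < f x * ENNReal.ofReal (ρ x) := by
          simpa [hf1 x rfl, ENNReal.ofReal_lt_ofReal_iff (hb0.trans_lt hb)] using hb
      _ ≤ ⨆ y, f y * ENNReal.ofReal (ρ y) := le_iSup_of_le x le_rfl
      _ = _ := iSup_mul_eq_of_invariant hinv hκ hK hρ hφ hP f hf
  simp only [ENNReal.iSup_mul, lt_iSup_iff] at hsup
  obtain ⟨z, y, hzy⟩ := hsup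
  have hyV : y ∈ V := by
    by_contra hy
    simp [hf0 y (mt (interior_subset ·) hy)] at hzy
  refine ⟨z, y, hyV, (ENNReal.ofReal_lt_ofReal_iff_of_nonneg hb0).1 (hzy.trans_le ?_)⟩
  rw [mul_comm (ρ z), ENNReal.ofReal_mul (hK z y).1]
  gcongr
  exact mul_le_of_le_one_left' (ENNReal.coe_le_one_iff.2 (hf y))

end Invariance

section LimitDensity

variable {E : Type*} [TopologicalSpace E] {T : E → ℝ≥0 → E → ℝ} {ρ : E → ℝ}

theorem lowerSemicontinuous_of_mul_le (hρ0 : ∀ x, 0 ≤ ρ x)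
    (hmove : ∀ x, ∀ ε > 0, ∃ t, ∀ᶠ x' in 𝓝 x, 1 - ε < T x t x')
    (hle : ∀ t x y, ρ y * T y t x ≤ ρ x) : LowerSemicontinuous ρ := by
  intro x b hb
  have hlim : Tendsto (fun ε : ℝ => ρ x * (1 - ε)) (𝓝[>] 0) (𝓝 (ρ x)) :=
    (Continuous.tendsto' (by fun_prop) _ _ (by simp)).mono_left nhdsWithin_le_nhds
  obtain ⟨ε, hbε, hε⟩ := ((hlim.eventually_const_lt hb).and self_mem_nhdsWithin).exists
  obtain ⟨t, ht⟩ := hmove x ε hε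
  filter_upwards [ht] with x' hx'
  calc b < ρ x * (1 - ε) := hbε
    _ ≤ ρ x * T x t x' := mul_le_mul_of_nonneg_left hx'.le (hρ0 x)
    _ ≤ ρ x' := hle t x' x

theorem exists_time_forall_exists_lt_mul (hρ0 : ∀ x, 0 ≤ ρ x)
    (hTC : ∀ x y z s t, T x s y * T y t z ≤ T x (s + t) z) {x : E}
    (hreturn : ∀ ε > 0, ∃ t, ∀ᶠ x' in 𝓝 x, 1 - ε < T x' t x)
    (hflow : ∀ s, ∀ V ∈ 𝓝 x, ∀ b ≥ 0, b < ρ x → ∃ z, ∃ y ∈ V, b < ρ z * T z s y) {b : ℝ}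
    (hb0 : 0 < b) (hb : b < ρ x) :
    ∃ t, ∀ s, ∃ z, b < ρ z * T z (s + t) x := by
  obtain ⟨c, hbc, hcx⟩ := exists_between hb
  have hc0 : 0 < c := hb0.trans hbc
  obtain ⟨t, ht⟩ := hreturn (1 - b / c) (sub_pos.2 ((div_lt_one hc0).2 hbc))
  simp only [sub_sub_cancel] at ht
  refine ⟨t, fun s => ?_⟩
  obtain ⟨z, y, hy : b / c < T y t x, hzy⟩ := hflow s _ ht c hc0.le hcx
  refine ⟨z, ?_⟩
  calc b = c * (b / c) := by field_simp
    _ < ρ z * T z s y * T y t x := mul_lt_mul'' hzy hy hc0.le (by positivity)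
    _ = ρ z * (T z s y * T y t x) := mul_assoc _ _ _
    _ ≤ ρ z * T z (s + t) x := mul_le_mul_of_nonneg_left (hTC ..) (hρ0 z)

theorem exists_le_mul_limit [FirstCountableTopology E] {PL : E → E → ℝ}
    (hρ0 : ∀ x, 0 ≤ ρ x) (hρc : Continuous ρ) (hρK : ∀ c > 0, IsCompact {x | c ≤ ρ x})
    (hT1 : ∀ x t y, T x t y ≤ 1) (hTC : ∀ x y z s t, T x s y * T y t z ≤ T x (s + t) z)
    (hmove : ∀ x, ∀ ε > 0, ∃ t, ∀ᶠ x' in 𝓝 x, 1 - ε < T x t x')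
    (hPL : ∀ x y, Tendsto (fun t => T x t y) atTop (𝓝 (PL x y))) {x : E} {b c : ℝ}
    (hb0 : 0 < b) (hbc : b < c) (hlong : ∃ t, ∀ s, ∃ z, c < ρ z * T z (s + t) x) :
    ∃ z, b ≤ ρ z * PL z x := by
  have hc0 : 0 < c := hb0.trans hbc
  obtain ⟨t, ht⟩ := hlong
  choose z hz using fun n : ℕ => ht n
  have hzK (n : ℕ) : z n ∈ {z | c ≤ ρ z} :=
    (hz n).le.trans (mul_le_of_le_one_right (hρ0 _) (hT1 ..))
  obtain ⟨w, -, ψ, hψ, hlim⟩ := (hρK c hc0).tendsto_subseq hzK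
  obtain ⟨r, hr⟩ := hmove w (1 - b / c) (sub_pos.2 ((div_lt_one hc0).2 hbc))
  simp only [sub_sub_cancel] at hr
  have hbound : ∀ᶠ n in atTop, b ≤ ρ (z (ψ n)) * T w (r + (ψ n + t)) x := by
    filter_upwards [hlim.eventually hr] with n hn
    calc b = (b / c) * c := by field_simp
      _ ≤ T w r (z (ψ n)) * (ρ (z (ψ n)) * T (z (ψ n)) (ψ n + t) x) :=
          mul_le_mul hn.le (hz _).le hc0.le ((div_nonneg hb0.le hc0.le).trans hn.le)
      _ = ρ (z (ψ n)) * (T w r (z (ψ n)) * T (z (ψ n)) (ψ n + t) x) := by ring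
      _ ≤ ρ (z (ψ n)) * T w (r + (ψ n + t)) x := mul_le_mul_of_nonneg_left (hTC ..) (hρ0 _)
  have htime : Tendsto (fun n => r + ((ψ n : ℝ≥0) + t)) atTop atTop :=
    tendsto_atTop_mono (fun n => le_add_of_le_right (le_add_of_nonneg_right zero_le))
      ((tendsto_natCast_atTop_atTop (R := ℝ≥0)).comp hψ.tendsto_atTop)
  exact ⟨w, ge_of_tendsto (((hρc.tendsto w).comp hlim).mul ((hPL w x).comp htime)) hbound⟩

end LimitDensity

theorem le_biSup_of_mem_Icc {α : Type*} {f : α → ℝ} (hf : ∀ a, f a ∈ Icc (0 : ℝ) 1) {A : Set α}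
    {a : α} (ha : a ∈ A) : f a ≤ ⨆ a ∈ A, f a :=
  le_ciSup₂ (f := fun a (_ : a ∈ A) => f a)
    ⟨1, by rintro _ ⟨_, ⟨b, rfl⟩, ⟨_, rfl⟩⟩; exact (hf b).2⟩ a ha

section ChapmanKolmogorov

variable {M : Type*} [MetricSpace M]

/-- The path that follows `X` up to time `s` and `Y`, started afresh, from then on. -/
def concatPath (s : ℝ≥0) (X Y : C(ℝ≥0, M)) (h : X s = Y 0) : C(ℝ≥0, M) where
  toFun u := if u ≤ s then X u else Y (u - s)
  continuous_toFun := by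
    refine Continuous.if_le X.continuous (by fun_prop) continuous_id continuous_const ?_
    rintro u rfl
    simpa using h

variable {s t : ℝ≥0} {X Y : C(ℝ≥0, M)}

theorem concatPath_of_le (h : X s = Y 0) {u : ℝ≥0} (hu : u ≤ s) : concatPath s X Y h u = X u :=
  if_pos hu

theorem concatPath_add (h : X s = Y 0) (u : ℝ≥0) : concatPath s X Y h (s + u) = Y u := by
  rcases eq_zero_or_pos u with rfl | hu
  · rw [add_zero, concatPath_of_le h le_rfl, h]
  · simp [concatPath, hu.ne']

theorem pshift_concatPath (h : X s = Y 0) : pshift s (concatPath s X Y h) = Y :=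
  ContinuousMap.ext (concatPath_add h)

variable {Px : M → C(ℝ≥0, M) → ℝ}

theorem transDen_mem_Icc (h01 : ∀ x X, Px x X ∈ Icc (0 : ℝ) 1) (x : M) (t : ℝ≥0) (y : M) :
    transDen Px x t y ∈ Icc (0 : ℝ) 1 :=
  ⟨Real.iSup_nonneg fun X => Real.iSup_nonneg fun _ => (h01 x X).1,
    Real.iSup_le (fun X => Real.iSup_le (fun _ => (h01 x X).2) zero_le_one) zero_le_one⟩

theorem mul_le_transDen_add (h01 : ∀ x X, Px x X ∈ Icc (0 : ℝ) 1)
    (hmarkov : ∀ x X (s : ℝ≥0),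
      Px x X = (⨆ X' ∈ {X' : C(ℝ≥0, M) | ∀ u ≤ s, X' u = X u}, Px x X') * Px (X s) (pshift s X))
    (x : M) (h : X s = Y 0) : Px x X * Px (X s) Y ≤ transDen Px x (s + t) (Y t) := by
  set Z := concatPath s X Y h
  have hZs : Z s = X s := concatPath_of_le h le_rfl
  calc Px x X * Px (X s) Y
      ≤ (⨆ X' ∈ {X' : C(ℝ≥0, M) | ∀ u ≤ s, X' u = Z u}, Px x X') * Px (X s) Y :=
        mul_le_mul_of_nonneg_right
          (le_biSup_of_mem_Icc (h01 x) fun u hu => (concatPath_of_le h hu).symm) (h01 _ _).1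
    _ = Px x Z := by rw [hmarkov x Z s, hZs, pshift_concatPath]
    _ ≤ transDen Px x (s + t) (Y t) := le_biSup_of_mem_Icc (h01 x) (concatPath_add h t)

theorem transDen_mul_transDen_le (h01 : ∀ x X, Px x X ∈ Icc (0 : ℝ) 1)
    (hstart : ∀ x (X : C(ℝ≥0, M)), X 0 ≠ x → Px x X = 0)
    (hmarkov : ∀ x X (s : ℝ≥0),
      Px x X = (⨆ X' ∈ {X' : C(ℝ≥0, M) | ∀ u ≤ s, X' u = X u}, Px x X') * Px (X s) (pshift s X))
    (x y z : M) (s t : ℝ≥0) :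
    transDen Px x s y * transDen Px y t z ≤ transDen Px x (s + t) z := by
  have hpaths (X Y : C(ℝ≥0, M)) (hX : X s = y) (hY : Y t = z) :
      Px x X * Px y Y ≤ transDen Px x (s + t) z := by
    by_cases hY0 : Y 0 = y
    · subst hX hY
      exact mul_le_transDen_add h01 hmarkov x hY0.symm
    · rw [hstart y Y hY0, mul_zero]
      exact (transDen_mem_Icc h01 _ _ _).1
  have h0 := (transDen_mem_Icc h01 x (s + t) z).1
  have hpath (X : C(ℝ≥0, M)) (hX : X s = y) :
      Px x X * transDen Px y t z ≤ transDen Px x (s + t) z := by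
    simp only [transDen, Real.mul_iSup_of_nonneg (h01 x X).1]
    exact Real.iSup_le (fun Y => Real.iSup_le (fun hY => hpaths X Y hX hY) h0) h0
  rw [transDen, Real.iSup_mul_of_nonneg (transDen_mem_Icc h01 y t z).1]
  refine Real.iSup_le (fun X => ?_) h0
  rw [Real.iSup_mul_of_nonneg (transDen_mem_Icc h01 y t z).1]
  exact Real.iSup_le (fun hX => hpath X hX) h0

end ChapmanKolmogorov

theorem DevSetup.eventually_lt_transDen {M : Type*} [MetricSpace M] {Px : M → C(ℝ≥0, M) → ℝ}
    {A : Set M} (h : DevSetup M Px A) (x : M) (ε : ℝ) (hε : 0 < ε) :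
    ∃ t₀ t₁, ∀ᶠ x' in 𝓝 x, 1 - ε < transDen Px x t₀ x' ∧ 1 - ε < transDen Px x' t₁ x := by
  obtain ⟨δ, hδ, t₀, t₁, hmove⟩ := h.localMove x ε hε
  refine ⟨t₀, t₁, ?_⟩
  filter_upwards [ball_mem_nhds x hδ] with x' hx'
  exact hmove x' (mem_ball'.1 hx')

theorem stmt8_general {E : Type*} [TopologicalSpace E] [T4Space E] [FirstCountableTopology E]
    [MeasurableSpace E] [OpensMeasurableSpace E] {T : E → ℝ≥0 → E → ℝ} {PL : E → E → ℝ}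
    (hT : ∀ x t y, T x t y ∈ Icc (0 : ℝ) 1)
    (hTC : ∀ x y z s t, T x s y * T y t z ≤ T x (s + t) z)
    (hmove : ∀ x, ∀ ε > 0, ∃ t₀ t₁, ∀ᶠ x' in 𝓝 x, 1 - ε < T x t₀ x' ∧ 1 - ε < T x' t₁ x)
    (hPL : ∀ x y, Tendsto (fun t => T x t y) atTop (𝓝 (PL x y)))
    {κ : ℕ → ℝ≥0 → Kernel E E} [∀ n t, IsMarkovKernel (κ n t)]
    {P : ℕ → Measure E} [∀ n, IsFiniteMeasure (P n)] (hinv : ∀ n t, (κ n t).Invariant (P n))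
    (hκ : ∀ (t : ℝ≥0) (x : E) (xs : ℕ → E), Tendsto xs atTop (𝓝 x) →
      LDConv (fun n => κ n t (xs n)) (fun n => n) (T x t))
    {ρ : E → ℝ} (hρ : IsDeviabilityDensity ρ) {φ : ℕ → ℕ} (hφ : Tendsto φ atTop atTop)
    (hP : LDConv (fun k => P (φ k)) φ ρ) :
    (∀ x, ρ x = ⨆ y, ρ y * PL y x) ∧ Continuous ρ := by
  have hle (t : ℝ≥0) (x y : E) : ρ y * T y t x ≤ ρ x :=
    mul_le_of_invariant (hinv · t) (hκ t) (hT · t) hρ hφ hP x y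
  have hout (x : E) (ε : ℝ) (hε : 0 < ε) : ∃ t, ∀ᶠ x' in 𝓝 x, 1 - ε < T x t x' :=
    let ⟨t, _, h⟩ := hmove x ε hε; ⟨t, h.mono fun _ => And.left⟩
  have hback (x : E) (ε : ℝ) (hε : 0 < ε) : ∃ t, ∀ᶠ x' in 𝓝 x, 1 - ε < T x' t x :=
    let ⟨_, t, h⟩ := hmove x ε hε; ⟨t, h.mono fun _ => And.right⟩
  have hcont : Continuous ρ := continuous_iff_lower_upperSemicontinuous.2
    ⟨lowerSemicontinuous_of_mul_le hρ.nonneg hout hle, hρ.upperSemicontinuous⟩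
  have hle_lim (x y : E) : ρ y * PL y x ≤ ρ x :=
    le_of_tendsto' ((hPL y x).const_mul (ρ y)) fun t => hle t x y
  refine ⟨fun x => le_antisymm (le_of_forall_lt_imp_le_of_dense fun b hb => ?_)
    (Real.iSup_le (hle_lim x) (hρ.nonneg x)), hcont⟩
  rcases le_or_gt b 0 with hb0 | hb0
  · exact hb0.trans <| Real.iSup_nonneg fun y =>
      mul_nonneg (hρ.nonneg y) (ge_of_tendsto' (hPL y x) fun t => (hT y t x).1)
  obtain ⟨c, hbc, hcx⟩ := exists_between hb
  have hlong := exists_time_forall_exists_lt_mul hρ.nonneg hTC (hback x)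
    (fun s _ hV _ ha0 hax => exists_lt_mul_of_invariant (hinv · s) (hκ s) (hT · s) hρ hφ hP
      hV hax ha0) (hb0.trans hbc) hcx
  obtain ⟨z, hz⟩ := exists_le_mul_limit hρ.nonneg hcont (fun _ => hρ.isCompact_setOf_le)
    (fun x t y => (hT x t y).2) hTC hout hPL hb0 hbc hlong
  exact hz.trans (le_ciSup ⟨ρ x, by rintro _ ⟨y, rfl⟩; exact hle_lim x y⟩ z)

theorem stmt8 (Px : S → C(ℝ≥0, S) → ℝ) (A : Set S) (hyp : DevSetup S Px A)
    (PL : S → S → ℝ)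
    (hPL : ∀ x y : S, Tendsto (fun t : ℝ≥0 => transDen Px x t y) atTop (𝓝 (PL x y)))
    (κ : ℕ → ℝ≥0 → ProbabilityTheory.Kernel S S)
    (hκ : ∀ n t, ProbabilityTheory.IsMarkovKernel (κ n t))
    (P : ℕ → Measure S) (hP : ∀ n, IsProbabilityMeasure (P n))
    (hinv : ∀ n (t : ℝ≥0) (Γ : Set S), MeasurableSet Γ →
      P n Γ = ∫⁻ x, κ n t x Γ ∂(P n))
    (hκLD : ∀ (t : ℝ≥0) (x : S) (xs : ℕ → S), Tendsto xs atTop (𝓝 x) →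
      LDConv (fun n => κ n t (xs n)) (fun n => n) (fun y => transDen Px x t y))
    (ρ : S → ℝ) (hρdev : IsDeviabilityDensity ρ)
    (φ : ℕ → ℕ) (hφ : StrictMono φ)
    (hρ : LDConv (fun k => P (φ k)) φ ρ) :
    (∀ x : S, ρ x = ⨆ y : S, ρ y * PL y x) ∧ Continuous ρ := by
  have hIcc x X := (hyp.dev x).1 X
  exact stmt8_general (transDen_mem_Icc hIcc) (transDen_mul_transDen_le hIcc hyp.start hyp.markov)
    hyp.eventually_lt_transDen hPL (fun n t => invariant_of_forall_measure_eq_lintegral (hinv n t))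
    hκLD hρdev hφ.tendsto_atTop hρ
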